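/- Let x and x̄ be two solutions of the system whose outputs coincide, i.e. C(t)x(t) = C(t)x̄(t) for all t ∈ [t0, τ], and let y denote this common output. Suppose there exist T ∈ (t0, τ] with Ψ(T) invertible, a constant ℓ ∈ (0, 1), and R ≥ max(‖x‖_{[t0,T]}, ‖x̄‖_{[t0,T]}) such that ‖F_T(·; d1) − F_T(·; d2)‖_{[t0,T]} ≤ ℓ ‖d1 − d2‖_{[t0,T]} for all continuous d1, d2 : [t0, T] → ℝⁿ with ‖d1‖_{[t0,T]} ≤ R and ‖d2‖_{[t0,T]} ≤ R. Then x(t) = x̄(t) for all t ∈ [t0, T]; in particular x(t0) = x̄(t0). -/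

import Mathlib

open MeasureTheory Matrix Set Filter Topology

noncomputable section

/-- `x` is a solution of `ẋ = A(t)x + g(t,x)` on `[t0, τ]` (integral form, componentwise). -/
def IsSolution (n : ℕ) (t0 τ : ℝ) (A : ℝ → Matrix (Fin n) (Fin n) ℝ)
    (g : ℝ → (Fin n → ℝ) → (Fin n → ℝ)) (x : ℝ → (Fin n → ℝ)) : Prop :=
  ContinuousOn x (Set.Icc t0 τ) ∧
    ∀ t ∈ Set.Icc t0 τ, ∀ i : Fin n,
      x t i = x t0 i + ∫ s in t0..t, ((A s).mulVec (x s) i + g s (x s) i)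

/-- `Φ` is the fundamental matrix of `ẋ = A(t)x` on `[t0, τ]`. -/
def IsFundamental (n : ℕ) (t0 τ : ℝ) (A : ℝ → Matrix (Fin n) (Fin n) ℝ)
    (Φ : ℝ → Matrix (Fin n) (Fin n) ℝ) : Prop :=
  (∀ i j : Fin n, ContinuousOn (fun t => Φ t i j) (Set.Icc t0 τ)) ∧
    ∀ t ∈ Set.Icc t0 τ, ∀ i j : Fin n,
      Φ t i j = (1 : Matrix (Fin n) (Fin n) ℝ) i j + ∫ s in t0..t, (A s * Φ s) i j

/-- `Ψ(t) = ∫_{t0}^t Φ(s)ᵀ C(s)ᵀ C(s) Φ(s) ds` (entrywise integral). -/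
def Psi (n k0 : ℕ) (t0 : ℝ) (C : ℝ → Matrix (Fin k0) (Fin n) ℝ)
    (Φ : ℝ → Matrix (Fin n) (Fin n) ℝ) (t : ℝ) : Matrix (Fin n) (Fin n) ℝ :=
  fun i j => ∫ s in t0..t, ((Φ s)ᵀ * (C s)ᵀ * C s * Φ s) i j

/-- `Ξ(t; z) = ∫_{t0}^t Φ(ρ)ᵀ C(ρ)ᵀ C(ρ) Φ(ρ) (∫_{t0}^ρ Φ(s)⁻¹ g(s, z(s)) ds) dρ`. -/
def Xi (n k0 : ℕ) (t0 : ℝ) (C : ℝ → Matrix (Fin k0) (Fin n) ℝ)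
    (Φ : ℝ → Matrix (Fin n) (Fin n) ℝ) (g : ℝ → (Fin n → ℝ) → (Fin n → ℝ))
    (z : ℝ → (Fin n → ℝ)) (t : ℝ) : Fin n → ℝ :=
  fun i => ∫ ρ in t0..t,
    ((Φ ρ)ᵀ * (C ρ)ᵀ * C ρ * Φ ρ).mulVec
      (fun i' => ∫ s in t0..ρ, ((Φ s)⁻¹).mulVec (g s (z s)) i') i

/-- The map `F_T(t; z)`. -/
def Fmap (n k0 : ℕ) (t0 : ℝ) (C : ℝ → Matrix (Fin k0) (Fin n) ℝ)
    (Φ : ℝ → Matrix (Fin n) (Fin n) ℝ) (g : ℝ → (Fin n → ℝ) → (Fin n → ℝ))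
    (y : ℝ → (Fin k0 → ℝ)) (T : ℝ) (z : ℝ → (Fin n → ℝ)) (t : ℝ) : Fin n → ℝ :=
  (Φ t).mulVec
      ((Psi n k0 t0 C Φ T)⁻¹.mulVec
        ((fun i => ∫ ρ in t0..T, ((Φ ρ)ᵀ * (C ρ)ᵀ).mulVec (y ρ) i)
          - Xi n k0 t0 C Φ g z T))
    + (Φ t).mulVec (fun i => ∫ ρ in t0..t, ((Φ ρ)⁻¹).mulVec (g ρ (z ρ)) i)

/-- supremum norm of `f` over `[a, b]`. -/
def supN (n : ℕ) (a b : ℝ) (f : ℝ → (Fin n → ℝ)) : ℝ :=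
  ⨆ t : Set.Icc a b, ‖f (t : ℝ)‖

/-- Regularity of the data `A`, `C`, `g` on `[t0, τ]`:  `A`, `C` measurable and bounded;
`g` measurable in `t`, continuous in `x`, bounded on bounded sets. -/
def RegularData (n k0 : ℕ) (t0 τ : ℝ) (A : ℝ → Matrix (Fin n) (Fin n) ℝ)
    (C : ℝ → Matrix (Fin k0) (Fin n) ℝ)
    (g : ℝ → (Fin n → ℝ) → (Fin n → ℝ)) : Prop :=
  (∀ i j, Measurable fun t => A t i j) ∧
  (∃ M : ℝ, ∀ t ∈ Set.Icc t0 τ, ∀ i j, |A t i j| ≤ M) ∧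
  (∀ i j, Measurable fun t => C t i j) ∧
  (∃ M : ℝ, ∀ t ∈ Set.Icc t0 τ, ∀ i j, |C t i j| ≤ M) ∧
  (∀ v : Fin n → ℝ, ∀ i, Measurable fun t => g t v i) ∧
  (∀ t ∈ Set.Icc t0 τ, Continuous (g t)) ∧
  (∀ R > (0:ℝ), ∃ M : ℝ, ∀ t ∈ Set.Icc t0 τ, ∀ v : Fin n → ℝ, ‖v‖ ≤ R → ‖g t v‖ ≤ M)


/-! ### Bounded measurable functions on a compact interval -/

/-- Bounded and a.e. measurable on `[a, b]`. -/
def BM (a b : ℝ) (f : ℝ → ℝ) : Prop :=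
  AEStronglyMeasurable f (volume.restrict (Set.Icc a b)) ∧
    ∃ M : ℝ, ∀ t ∈ Set.Icc a b, |f t| ≤ M

theorem BM.mul {a b : ℝ} {f h : ℝ → ℝ} (hf : BM a b f) (hh : BM a b h) :
    BM a b (fun t => f t * h t) := by
  obtain ⟨hf1, M, hM⟩ := hf
  obtain ⟨hh1, N, hN⟩ := hh
  refine ⟨hf1.mul hh1, M * N, fun t ht => ?_⟩
  rw [abs_mul]
  exact mul_le_mul (hM t ht) (hN t ht) (abs_nonneg _) ((abs_nonneg _).trans (hM t ht))

theorem BM.add {a b : ℝ} {f h : ℝ → ℝ} (hf : BM a b f) (hh : BM a b h) :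
    BM a b (fun t => f t + h t) := by
  obtain ⟨hf1, M, hM⟩ := hf
  obtain ⟨hh1, N, hN⟩ := hh
  exact ⟨hf1.add hh1, M + N, fun t ht => (abs_add_le _ _).trans (add_le_add (hM t ht) (hN t ht))⟩

theorem BM.sum {a b : ℝ} {m : ℕ} {f : Fin m → ℝ → ℝ} (hf : ∀ i, BM a b (f i)) :
    BM a b (fun t => ∑ i, f i t) := by
  choose h1 M hM using hf
  refine ⟨Finset.aestronglyMeasurable_fun_sum _ (fun i _ => h1 i), ∑ i, M i, fun t ht => ?_⟩
  exact (Finset.abs_sum_le_sum_abs _ _).trans (Finset.sum_le_sum fun i _ => hM i t ht)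

theorem BM.of_cont {a b : ℝ} {f : ℝ → ℝ} (hf : ContinuousOn f (Set.Icc a b)) : BM a b f := by
  refine ⟨hf.aestronglyMeasurable measurableSet_Icc, ?_⟩
  obtain ⟨M, hM⟩ := isCompact_Icc.exists_bound_of_continuousOn hf
  exact ⟨M, fun t ht => by simpa using hM t ht⟩

theorem BM.ii {a b : ℝ} {f : ℝ → ℝ} (hf : BM a b f) {t : ℝ} (ht : t ∈ Set.Icc a b) :
    IntervalIntegrable f volume a t := by
  obtain ⟨h1, M, hM⟩ := hf
  rw [intervalIntegrable_iff_integrableOn_Icc_of_le ht.1]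
  have hs : Set.Icc a t ⊆ Set.Icc a b := Set.Icc_subset_Icc_right ht.2
  refine IntegrableOn.of_bound (by simp) (h1.mono_set hs) M ?_
  filter_upwards [ae_restrict_mem measurableSet_Icc] with s hs'
  exact hM s (hs hs')

theorem BM.cont {a b : ℝ} (hab : a ≤ b) {f : ℝ → ℝ} (hf : BM a b f) :
    ContinuousOn (fun t => ∫ s in a..t, f s) (Set.Icc a b) := by
  have h := (hf.ii (Set.right_mem_Icc.2 hab))
  have := intervalIntegral.continuousOn_primitive_interval' h (Set.left_mem_uIcc)
  rwa [Set.uIcc_of_le hab] at this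

theorem prod_rule {a b : ℝ} (hab : a ≤ b) {f f' h h' : ℝ → ℝ}
    (hf' : IntervalIntegrable f' volume a b) (hh' : IntervalIntegrable h' volume a b)
    (hf : ∀ t ∈ Set.Icc a b, f t = f a + ∫ s in a..t, f' s)
    (hh : ∀ t ∈ Set.Icc a b, h t = h a + ∫ s in a..t, h' s) :
    f b * h b = f a * h a + ∫ s in a..b, (f' s * h s + f s * h' s) := by
  have key : ∀ (c : ℝ) (u : ℝ → ℝ), IntervalIntegrable u volume a b →
      AbsolutelyContinuousOnInterval (fun t => c + ∫ s in a..t, u s) a b := by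
    intro c u hu
    have h1 : AbsolutelyContinuousOnInterval (fun _ : ℝ => c) a b :=
      ((LipschitzWith.const c).lipschitzOnWith (s := Set.uIcc a b)).absolutelyContinuousOnInterval
    exact h1.fun_add (hu.absolutelyContinuousOnInterval_intervalIntegral Set.left_mem_uIcc)
  have := (key (f a) f' hf').integral_deriv_mul_eq_sub (key (h a) h' hh')
  simp only [intervalIntegral.integral_same, add_zero] at this
  rw [← hf b (Set.right_mem_Icc.2 hab), ← hh b (Set.right_mem_Icc.2 hab)] at this
  rw [eq_comm, sub_eq_iff_eq_add'] at this
  rw [this]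
  congr 1
  apply intervalIntegral.integral_congr_ae
  filter_upwards [hf'.ae_hasDerivAt_integral, hh'.ae_hasDerivAt_integral] with t h1 h2 ht
  have htu := Set.uIoc_subset_uIcc ht
  have htI : t ∈ Set.Icc a b := by rwa [Set.uIcc_of_le hab] at htu
  rw [((h1 htu a Set.left_mem_uIcc).const_add (f a)).deriv,
    ((h2 htu a Set.left_mem_uIcc).const_add (h a)).deriv, ← hf t htI, ← hh t htI]

theorem gron {a b K : ℝ} (hab : a ≤ b) {u : ℝ → ℝ} (hu : ContinuousOn u (Set.Icc a b))
    (h0 : ∀ t ∈ Set.Icc a b, 0 ≤ u t)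
    (hK : ∀ t ∈ Set.Icc a b, u t ≤ K * ∫ s in a..t, u s) :
    ∀ t ∈ Set.Icc a b, u t = 0 := by
  set v : ℝ → ℝ := Set.IccExtend hab (Set.domRestrict (Set.Icc a b) u) with hv
  have hvc : Continuous v := (continuousOn_iff_continuous_domRestrict.1 hu).Icc_extend'
  have hvu : ∀ t ∈ Set.Icc a b, v t = u t := fun t ht => by
    rw [hv, Set.IccExtend_of_mem hab _ ht]; rfl
  have hvint : ∀ t ∈ Set.Icc a b, ∫ s in a..t, v s = ∫ s in a..t, u s := fun t ht => by
    apply intervalIntegral.integral_congr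
    intro s hs
    rw [Set.uIcc_of_le ht.1] at hs
    exact hvu s ⟨hs.1, hs.2.trans ht.2⟩
  have hd : ∀ t, HasDerivAt (fun t => ∫ s in a..t, v s) (v t) t := fun t =>
    intervalIntegral.integral_hasDerivAt_right (hvc.intervalIntegrable _ _)
      (hvc.stronglyMeasurableAtFilter _ _) hvc.continuousAt
  have hnn : ∀ t ∈ Set.Icc a b, 0 ≤ ∫ s in a..t, v s := fun t ht => by
    apply intervalIntegral.integral_nonneg ht.1
    intro s hs
    have hs' : s ∈ Set.Icc a b := ⟨hs.1, hs.2.trans ht.2⟩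
    rw [hvu s hs']; exact h0 s hs'
  have := norm_le_gronwallBound_of_norm_deriv_right_le (f := fun t => ∫ s in a..t, v s)
    (f' := v) (δ := 0) (K := K) (ε := 0) (a := a) (b := b)
    (fun t _ => (hd t).continuousAt.continuousWithinAt) (fun t _ => (hd t).hasDerivWithinAt)
    (by simp) (by
      intro t ht
      have ht' := Set.Ico_subset_Icc_self ht
      rw [Real.norm_of_nonneg (hnn t ht'), add_zero, hvint t ht', hvu t ht',
        Real.norm_of_nonneg (h0 t ht')]
      exact hK t ht')
  intro t ht
  have h1 := this t ht
  rw [gronwallBound_ε0_δ0, norm_le_zero_iff, hvint t ht] at h1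
  have h2 := hK t ht
  rw [h1, mul_zero] at h2
  exact le_antisymm h2 (h0 t ht)

theorem BM.g {n : ℕ} {a b : ℝ} (hab : a ≤ b) {g : ℝ → (Fin n → ℝ) → (Fin n → ℝ)}
    (hm : ∀ v : Fin n → ℝ, ∀ i, Measurable fun t => g t v i)
    (hc : ∀ t ∈ Set.Icc a b, Continuous (g t))
    (hb : ∀ R > (0:ℝ), ∃ M : ℝ, ∀ t ∈ Set.Icc a b, ∀ v : Fin n → ℝ, ‖v‖ ≤ R → ‖g t v‖ ≤ M)
    {x : ℝ → (Fin n → ℝ)} (hx : ContinuousOn x (Set.Icc a b)) (i : Fin n) :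
    BM a b (fun t => g t (x t) i) := by
  constructor
  · set u : (Fin n → ℝ) → ℝ → ℝ := fun v t => (Set.Icc a b).indicator (fun t => g t v i) t with hu
    have hum : Measurable (Function.uncurry u) := by
      apply measurable_uncurry_of_continuous_of_measurable
      · intro t
        by_cases ht : t ∈ Set.Icc a b
        · simp only [hu, Set.indicator_of_mem ht]
          exact (continuous_apply i).comp (hc t ht)
        · simp only [hu, Set.indicator_of_notMem ht]
          exact continuous_const
      · intro v
        exact (hm v i).indicator measurableSet_Icc
    have hxc : Continuous (Set.IccExtend hab (Set.domRestrict (Set.Icc a b) x)) :=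
      (continuousOn_iff_continuous_domRestrict.1 hx).Icc_extend'
    have := (hum.comp (hxc.measurable.prodMk measurable_id)).aestronglyMeasurable
      (μ := volume.restrict (Set.Icc a b))
    refine this.congr ?_
    filter_upwards [ae_restrict_mem measurableSet_Icc] with t ht
    simp only [hu, Function.comp, Function.uncurry, id, Set.indicator_of_mem ht,
      Set.IccExtend_of_mem hab _ ht]
    rfl
  · obtain ⟨R, hR⟩ := isCompact_Icc.exists_bound_of_continuousOn hx
    obtain ⟨M, hM⟩ := hb (max R 1) (by positivity)
    refine ⟨M, fun t ht => ?_⟩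
    exact (norm_le_pi_norm (g t (x t)) i).trans (hM t ht _ ((hR t ht).trans (le_max_left _ _)))

theorem inv_cont {n : ℕ} {a b : ℝ} {Φ : ℝ → Matrix (Fin n) (Fin n) ℝ}
    (hΦ : ∀ i j : Fin n, ContinuousOn (fun t => Φ t i j) (Set.Icc a b))
    (hinv : ∀ t ∈ Set.Icc a b, IsUnit (Φ t)) (i j : Fin n) :
    ContinuousOn (fun t => (Φ t)⁻¹ i j) (Set.Icc a b) := by
  have h : ContinuousOn Φ (Set.Icc a b) :=
    continuousOn_pi.2 fun i => continuousOn_pi.2 fun j => hΦ i j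
  have hdet : ContinuousOn (fun t => (Φ t).det) (Set.Icc a b) :=
    (Continuous.matrix_det continuous_id).comp_continuousOn h
  have hadj : ContinuousOn (fun t => (Φ t).adjugate i j) (Set.Icc a b) :=
    ((Continuous.matrix_adjugate continuous_id).matrix_elem i j).comp_continuousOn h
  have h2 : ∀ t ∈ Set.Icc a b, (Φ t).det ≠ 0 := fun t ht =>
    ((Matrix.isUnit_iff_isUnit_det _).1 (hinv t ht)).ne_zero
  simp only [Matrix.inv_def, Ring.inverse_eq_inv', Matrix.smul_apply, smul_eq_mul]
  exact (hdet.inv₀ h2).mul hadj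

/-- Variation of constants. -/
theorem voc {n k0 : ℕ} {t0 τ : ℝ} (ht : t0 < τ)
    {A : ℝ → Matrix (Fin n) (Fin n) ℝ} {C : ℝ → Matrix (Fin k0) (Fin n) ℝ}
    {g : ℝ → (Fin n → ℝ) → (Fin n → ℝ)}
    (hreg : RegularData n k0 t0 τ A C g)
    {Φ : ℝ → Matrix (Fin n) (Fin n) ℝ} (hΦ : IsFundamental n t0 τ A Φ)
    (hΦinv : ∀ t ∈ Set.Icc t0 τ, IsUnit (Φ t))
    {x : ℝ → (Fin n → ℝ)} (hx : IsSolution n t0 τ A g x) :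
    (∀ i, BM t0 τ (fun s => ((Φ s)⁻¹).mulVec (g s (x s)) i)) ∧
    ∀ t ∈ Set.Icc t0 τ, x t = (Φ t).mulVec (x t0 +
      fun i => ∫ s in t0..t, ((Φ s)⁻¹).mulVec (g s (x s)) i) := by
  obtain ⟨hAm, ⟨M, hM⟩, -, -, hgm, hgc, hgb⟩ := hreg
  obtain ⟨hΦc, hΦe⟩ := hΦ
  obtain ⟨hxc, hxe⟩ := hx
  have hle := ht.le
  have hA : ∀ i j, BM t0 τ (fun s => A s i j) := fun i j =>
    ⟨(hAm i j).aestronglyMeasurable, M, fun t ht => hM t ht i j⟩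
  have hg : ∀ i, BM t0 τ (fun s => g s (x s) i) := BM.g hle hgm hgc hgb hxc
  have hΦb : ∀ i j, BM t0 τ (fun s => Φ s i j) := fun i j => BM.of_cont (hΦc i j)
  have hq : ∀ i, BM t0 τ (fun s => ((Φ s)⁻¹).mulVec (g s (x s)) i) := fun i => by
    simp only [Matrix.mulVec, dotProduct]
    exact BM.sum fun j => (BM.of_cont (inv_cont hΦc hΦinv i j)).mul (hg j)
  refine ⟨hq, ?_⟩
  have hAΦ : ∀ i j, BM t0 τ (fun s => (A s * Φ s) i j) := fun i j => by
    simp only [Matrix.mul_apply]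
    exact BM.sum fun k => (hA i k).mul (hΦb k j)
  set q : ℝ → Fin n → ℝ := fun s => ((Φ s)⁻¹).mulVec (g s (x s)) with hqdef
  set p : ℝ → Fin n → ℝ := fun t i => x t0 i + ∫ s in t0..t, q s i with hp
  have hp0 : p t0 = x t0 := by ext i; simp [hp]
  have hpc : ∀ i, ContinuousOn (fun t => p t i) (Set.Icc t0 τ) := fun i =>
    continuousOn_const.add ((hq i).cont hle)
  have hΦ0 : Φ t0 = 1 := by
    ext i j; rw [hΦe t0 (Set.left_mem_Icc.2 hle) i j]; simp
  set w : ℝ → Fin n → ℝ := fun t => (Φ t).mulVec (p t) with hw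
  have hwi : ∀ t i, w t i = ∑ j, Φ t i j * p t j := fun t i => rfl
  have hwc : ContinuousOn w (Set.Icc t0 τ) := by
    refine continuousOn_pi.2 fun i => ?_
    simp only [hwi]
    exact continuousOn_finsetSum _ fun j _ => (hΦc i j).mul (hpc j)
  have hAv : ∀ {v : ℝ → Fin n → ℝ}, ContinuousOn v (Set.Icc t0 τ) → ∀ i,
      BM t0 τ (fun s => (A s).mulVec (v s) i) := fun {v} hv i => by
    simp only [Matrix.mulVec, dotProduct]
    exact BM.sum fun j => (hA i j).mul (BM.of_cont (continuousOn_pi.1 hv j))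
  have hwe : ∀ t ∈ Set.Icc t0 τ, ∀ i,
      w t i = x t0 i + ∫ s in t0..t, ((A s).mulVec (w s) i + g s (x s) i) := by
    intro t htt i
    have h1 : ∀ j, Φ t i j * p t j = Φ t0 i j * p t0 j +
        ∫ s in t0..t, ((A s * Φ s) i j * p s j + Φ s i j * q s j) := fun j => by
      refine prod_rule (f := fun s => Φ s i j) (h := fun s => p s j) htt.1
        ((hAΦ i j).ii htt) ((hq j).ii htt) ?_ ?_
      · intro s hs
        simp only [hΦ0]
        exact hΦe s ⟨hs.1, hs.2.trans htt.2⟩ i j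
      · intro s hs
        simp only [hp0]
        rfl
    rw [hwi, Finset.sum_congr rfl (fun j _ => h1 j), Finset.sum_add_distrib,
      ← intervalIntegral.integral_finsetSum]
    · congr 1
      · rw [hΦ0, hp0]
        simp [Matrix.one_apply]
      · apply intervalIntegral.integral_congr
        intro s hs
        rw [Set.uIcc_of_le htt.1] at hs
        have hs' : s ∈ Set.Icc t0 τ := ⟨hs.1, hs.2.trans htt.2⟩
        simp only [Finset.sum_add_distrib]
        have e1 : ∑ j, (A s * Φ s) i j * p s j = (A s).mulVec (w s) i := by
          rw [hw]; simp only [Matrix.mulVec_mulVec]; rfl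
        have e2 : ∑ j, Φ s i j * q s j = g s (x s) i := by
          have : (Φ s).mulVec (q s) = g s (x s) := by
            rw [hqdef]
            simp only [Matrix.mulVec_mulVec]
            rw [Matrix.mul_nonsing_inv _ ((Matrix.isUnit_iff_isUnit_det _).1 (hΦinv s hs')),
              Matrix.one_mulVec]
          rw [← this]; rfl
        rw [e1, e2]
    · intro j _
      exact (((hAΦ i j).mul (BM.of_cont (hpc j))).add ((hΦb i j).mul (hq j))).ii htt
  have hee : ∀ t ∈ Set.Icc t0 τ, ∀ i,
      (x t - w t) i = ∫ s in t0..t, (A s).mulVec (x s - w s) i := by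
    intro t htt i
    rw [Pi.sub_apply, hxe t htt i, hwe t htt i, add_sub_add_left_eq_sub,
      ← intervalIntegral.integral_sub (((hAv hxc i).add (hg i)).ii htt)
        (((hAv hwc i).add (hg i)).ii htt)]
    simp only [Matrix.mulVec_sub, Pi.sub_apply, add_sub_add_right_eq_sub]
  have hec : ContinuousOn (fun t => x t - w t) (Set.Icc t0 τ) := hxc.sub hwc
  have hfin := gron (K := n * |M|) hle (u := fun t => ‖x t - w t‖) hec.norm
    (fun _ _ => norm_nonneg _) (by
      intro t htt
      have hnn : 0 ≤ ∫ s in t0..t, ‖x s - w s‖ :=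
        intervalIntegral.integral_nonneg htt.1 fun _ _ => norm_nonneg _
      refine (pi_norm_le_iff_of_nonneg (by positivity)).2 fun i => ?_
      rw [hee t htt i, ← intervalIntegral.integral_const_mul]
      refine intervalIntegral.norm_integral_le_of_norm_le htt.1 ?_
        (((BM.of_cont hec.norm).ii htt).const_mul _)
      refine Filter.Eventually.of_forall fun s hs => ?_
      have hs' : s ∈ Set.Icc t0 τ := ⟨hs.1.le, hs.2.trans htt.2⟩
      calc ‖(A s).mulVec (x s - w s) i‖ ≤ ∑ j, ‖A s i j * (x s - w s) j‖ := by
            simp only [Matrix.mulVec, dotProduct]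
            exact norm_sum_le _ _
        _ ≤ ∑ _j : Fin n, |M| * ‖x s - w s‖ := by
          refine Finset.sum_le_sum fun j _ => ?_
          rw [norm_mul]
          exact mul_le_mul ((hM s hs' i j).trans (le_abs_self M)) (norm_le_pi_norm _ j)
            (norm_nonneg _) (abs_nonneg _)
        _ = n * |M| * ‖x s - w s‖ := by simp [mul_assoc])
  intro t htt
  have := hfin t htt
  exact sub_eq_zero.1 (norm_eq_zero.1 this)

theorem Ffix {n k0 : ℕ} {t0 τ : ℝ} (ht : t0 < τ)
    {A : ℝ → Matrix (Fin n) (Fin n) ℝ} {C : ℝ → Matrix (Fin k0) (Fin n) ℝ}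
    {g : ℝ → (Fin n → ℝ) → (Fin n → ℝ)}
    (hreg : RegularData n k0 t0 τ A C g)
    {Φ : ℝ → Matrix (Fin n) (Fin n) ℝ} (hΦ : IsFundamental n t0 τ A Φ)
    (hΦinv : ∀ t ∈ Set.Icc t0 τ, IsUnit (Φ t))
    {x : ℝ → (Fin n → ℝ)} (hx : IsSolution n t0 τ A g x)
    {y : ℝ → (Fin k0 → ℝ)} (hy : ∀ t ∈ Set.Icc t0 τ, y t = (C t).mulVec (x t))
    {T : ℝ} (hT : T ∈ Set.Ioc t0 τ) (hΨT : IsUnit (Psi n k0 t0 C Φ T)) :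
    ∀ t ∈ Set.Icc t0 T, Fmap n k0 t0 C Φ g y T x t = x t := by
  obtain ⟨hq, hvoc⟩ := voc ht hreg hΦ hΦinv hx
  obtain ⟨-, -, hCm, ⟨M, hM⟩, -, -, -⟩ := hreg
  have hTI : T ∈ Set.Icc t0 τ := ⟨hT.1.le, hT.2⟩
  have hC : ∀ i j, BM t0 τ (fun s => C s i j) := fun i j =>
    ⟨(hCm i j).aestronglyMeasurable, M, fun t ht => hM t ht i j⟩
  have hΦb : ∀ i j, BM t0 τ (fun s => Φ s i j) := fun i j => BM.of_cont (hΦ.1 i j)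
  set G : ℝ → Matrix (Fin n) (Fin n) ℝ := fun s => (Φ s)ᵀ * (C s)ᵀ * C s * Φ s with hG
  have hGb : ∀ i j, BM t0 τ (fun s => G s i j) := fun i j => by
    simp only [hG, Matrix.mul_apply, Matrix.transpose_apply]
    exact BM.sum fun k => (BM.sum fun l => (BM.sum fun m => (hΦb _ _).mul (hC _ _)).mul
      (hC _ _)).mul (hΦb _ _)
  set P : ℝ → Fin n → ℝ := fun t i => ∫ s in t0..t, ((Φ s)⁻¹).mulVec (g s (x s)) i with hP
  have hPb : ∀ i, BM t0 τ (fun t => P t i) := fun i => BM.of_cont ((hq i).cont ht.le)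
  have hkey : (fun i => ∫ ρ in t0..T, ((Φ ρ)ᵀ * (C ρ)ᵀ).mulVec (y ρ) i)
      = (Psi n k0 t0 C Φ T).mulVec (x t0) + Xi n k0 t0 C Φ g x T := by
    ext i
    have e1 : ∫ ρ in t0..T, ((Φ ρ)ᵀ * (C ρ)ᵀ).mulVec (y ρ) i
        = ∫ ρ in t0..T, ((∑ j, G ρ i j * x t0 j) + (G ρ).mulVec (P ρ) i) := by
      apply intervalIntegral.integral_congr
      intro s hs
      rw [Set.uIcc_of_le hTI.1] at hs
      have hs' : s ∈ Set.Icc t0 τ := ⟨hs.1, hs.2.trans hTI.2⟩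
      have : ((Φ s)ᵀ * (C s)ᵀ).mulVec (y s) = (G s).mulVec (x t0) + (G s).mulVec (P s) := by
        rw [hy s hs', hvoc s hs', ← Matrix.mulVec_add, hG]
        simp only [Matrix.mulVec_mulVec, Matrix.mul_assoc]
        rfl
      simp only [this]
      rfl
    rw [e1, intervalIntegral.integral_add, intervalIntegral.integral_finsetSum]
    · simp only [intervalIntegral.integral_mul_const]
      rfl
    · intro j _
      exact ((hGb i j).ii hTI).mul_const _
    · exact (BM.sum fun j => (hGb i j).mul (BM.of_cont continuousOn_const)).ii hTI
    · exact (BM.sum fun j => (hGb i j).mul (hPb j)).ii hTI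
  intro t htt
  have htI : t ∈ Set.Icc t0 τ := ⟨htt.1, htt.2.trans hTI.2⟩
  rw [Fmap, hkey, add_sub_cancel_right, Matrix.mulVec_mulVec _ (Psi n k0 t0 C Φ T)⁻¹,
    Matrix.nonsing_inv_mul _ ((Matrix.isUnit_iff_isUnit_det _).1 hΨT), Matrix.one_mulVec,
    ← Matrix.mulVec_add]
  exact (hvoc t htI).symm

theorem stmt1 (n k0 : ℕ) (hn : 1 ≤ n) (hk0 : 1 ≤ k0) (t0 τ : ℝ) (ht : t0 < τ)
    (A : ℝ → Matrix (Fin n) (Fin n) ℝ) (C : ℝ → Matrix (Fin k0) (Fin n) ℝ)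
    (g : ℝ → (Fin n → ℝ) → (Fin n → ℝ))
    (hreg : RegularData n k0 t0 τ A C g)
    (Φ : ℝ → Matrix (Fin n) (Fin n) ℝ) (hΦ : IsFundamental n t0 τ A Φ)
    (hΦinv : ∀ t ∈ Set.Icc t0 τ, IsUnit (Φ t))
    (x xb : ℝ → (Fin n → ℝ))
    (hx : IsSolution n t0 τ A g x) (hxb : IsSolution n t0 τ A g xb)
    (houtput : ∀ t ∈ Set.Icc t0 τ, (C t).mulVec (x t) = (C t).mulVec (xb t))
    (y : ℝ → (Fin k0 → ℝ)) (hy : ∀ t ∈ Set.Icc t0 τ, y t = (C t).mulVec (x t))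
    (T : ℝ) (hT : T ∈ Set.Ioc t0 τ) (hΨT : IsUnit (Psi n k0 t0 C Φ T))
    (ℓ : ℝ) (hℓ : ℓ ∈ Set.Ioo (0:ℝ) 1)
    (R : ℝ) (hR : max (supN n t0 T x) (supN n t0 T xb) ≤ R)
    (hcontr : ∀ d1 d2 : ℝ → (Fin n → ℝ),
      ContinuousOn d1 (Set.Icc t0 T) → ContinuousOn d2 (Set.Icc t0 T) →
      supN n t0 T d1 ≤ R → supN n t0 T d2 ≤ R →
      supN n t0 T (fun t => Fmap n k0 t0 C Φ g y T d1 t - Fmap n k0 t0 C Φ g y T d2 t)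
        ≤ ℓ * supN n t0 T (fun t => d1 t - d2 t)) :
    (∀ t ∈ Set.Icc t0 T, x t = xb t) ∧ x t0 = xb t0 := by
  have hsub : Set.Icc t0 T ⊆ Set.Icc t0 τ := Set.Icc_subset_Icc_right hT.2
  have f1 := Ffix ht hreg hΦ hΦinv hx hy hT hΨT
  have f2 := Ffix ht hreg hΦ hΦinv hxb
    (fun t h => (hy t h).trans (houtput t h)) hT hΨT
  have hc1 := hx.1.mono hsub
  have hc2 := hxb.1.mono hsub
  have h := hcontr x xb hc1 hc2 ((le_max_left _ _).trans hR) ((le_max_right _ _).trans hR)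
  have he : supN n t0 T (fun t => Fmap n k0 t0 C Φ g y T x t - Fmap n k0 t0 C Φ g y T xb t)
      = supN n t0 T (fun t => x t - xb t) := by
    unfold supN
    congr 1
    ext t
    simp only [f1 t t.2, f2 t t.2]
  rw [he] at h
  have hle : supN n t0 T (fun t => x t - xb t) ≤ 0 := by
    have := hℓ.2
    nlinarith
  obtain ⟨B, hB⟩ := isCompact_Icc.exists_bound_of_continuousOn (hc1.sub hc2)
  have hmain : ∀ t ∈ Set.Icc t0 T, x t = xb t := by
    intro t htt
    have hb : BddAbove (Set.range fun t : Set.Icc t0 T => ‖x (t : ℝ) - xb (t : ℝ)‖) :=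
      ⟨B, by rintro _ ⟨s, rfl⟩; exact hB s s.2⟩
    have h1 : ‖x t - xb t‖ ≤ supN n t0 T (fun t => x t - xb t) := le_ciSup hb ⟨t, htt⟩
    exact sub_eq_zero.1 (norm_le_zero_iff.1 (h1.trans hle))
  exact ⟨hmain, hmain t0 (Set.left_mem_Icc.2 hT.1.le)⟩
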